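/- The double series F := ∑_{m,n=0}^∞ ((2)_{m+n}/(5/2)_{m+n}) · ((1)_m(1)_m/((2)_m m!)) · ((1/2)_n(1/2)_n/((1)_n n!)) converges and equals 3π log 2. -/

import Mathlib

/-!
For fixed `n`, the sum over `m` of the Kampé de Fériet series telescopes: up to a factor depending
on `n`, it is the partial digamma sum `∑_{k ≤ n} 1 / (d - 2 + k)`. The remaining weights are the
terms of `₂F₁(a, b; d - 1; 1)`, and multiplying the `n`-th term of `₂F₁(a, b; c; 1)` by
`-∑_{k < n} 1 / (c + k)` is differentiating it in `c`. Apart from the `k = 0` term, which gives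
Gauss's series itself, the double series is therefore minus the `c`-derivative of Gauss's summation
theorem: a Gamma quotient times a combination of digamma values. For `a = b = 1 / 2` and
`d = 5 / 2` that combination is `2 (ψ(1) - ψ(1 / 2)) = 4 log 2`.
-/

open Filter Topology Finset MeasureTheory ProbabilityTheory
open scoped Nat

lemma ascPochhammer_eval_eq_prod_range {R : Type*} [CommSemiring R] (n : ℕ) (x : R) :
    (ascPochhammer R n).eval x = ∏ k ∈ range n, (x + k) := by
  induction n with
  | zero => simp
  | succ n ih => rw [ascPochhammer_succ_eval, ih, prod_range_succ]

lemma ascPochhammer_eval_add {R : Type*} [CommSemiring R] (m n : ℕ) (x : R) :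
    (ascPochhammer R (m + n)).eval x =
      (ascPochhammer R m).eval x * (ascPochhammer R n).eval (x + m) := by
  simp [← ascPochhammer_mul]

lemma ascPochhammer_eval_succ_left {R : Type*} [CommSemiring R] (n : ℕ) (x : R) :
    (ascPochhammer R (n + 1)).eval x = x * (ascPochhammer R n).eval (x + 1) := by
  simp [ascPochhammer_succ_left]

lemma mul_ascPochhammer_eval_add_one {R : Type*} [CommSemiring R] (m n : ℕ) (x : R) :
    x * (ascPochhammer R (m + n)).eval (x + 1) =
      (ascPochhammer R n).eval x * (ascPochhammer R (m + 1)).eval (x + n) := by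
  rw [← ascPochhammer_eval_succ_left, ← ascPochhammer_eval_add, add_comm m n, add_assoc]

lemma ascPochhammer_eval_two (R : Type*) [CommSemiring R] (n : ℕ) :
    (ascPochhammer R n).eval 2 = (n + 1)! := by
  simp [← ascPochhammer_eval_one, ascPochhammer_eval_succ_left, one_add_one_eq_two]

lemma Gamma_add_natCast {x : ℝ} (hx : 0 < x) (n : ℕ) :
    Real.Gamma (x + n) = (ascPochhammer ℝ n).eval x * Real.Gamma x := by
  induction n with
  | zero => simp
  | succ n ih =>
    rw [Nat.cast_succ, ← add_assoc, Real.Gamma_add_one (by positivity), ih,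
      ascPochhammer_succ_eval]
    ring

lemma hasSum_sub_succ_of_antitone {v : ℕ → ℝ} {l : ℝ} (hv : Antitone v)
    (hl : Tendsto v atTop (𝓝 l)) : HasSum (fun n ↦ v n - v (n + 1)) (v 0 - l) := by
  rw [hasSum_iff_tendsto_nat_of_nonneg fun n ↦ sub_nonneg.2 (hv n.le_succ)]
  simpa only [sum_range_sub'] using hl.const_sub (v 0)

lemma tendsto_ascPochhammer_div_ascPochhammer_add {x s : ℝ} (hx : 0 < x) (hs : 0 < s) :
    Tendsto (fun n ↦ (ascPochhammer ℝ n).eval x / (ascPochhammer ℝ n).eval (x + s)) atTop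
      (𝓝 0) := by
  rw [← tendsto_add_atTop_iff_nat 1]
  have hΓ : Tendsto (fun n : ℕ ↦ (n : ℝ) ^ (-s) *
      (Real.GammaSeq (x + s) n / Real.GammaSeq x n)) atTop (𝓝 0) := by
    have hpow := (tendsto_rpow_neg_atTop hs).comp (tendsto_natCast_atTop_atTop (R := ℝ))
    simpa using hpow.mul ((Real.GammaSeq_tendsto_Gamma (x + s)).div
      (Real.GammaSeq_tendsto_Gamma x) (Real.Gamma_pos_of_pos hx).ne')
  refine hΓ.congr' ?_
  filter_upwards [eventually_gt_atTop 0] with n hn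
  have hn' : (0 : ℝ) < n := by exact_mod_cast hn
  simp only [Real.GammaSeq, ← ascPochhammer_eval_eq_prod_range, Real.rpow_add hn',
    Real.rpow_neg hn'.le]
  field_simp

lemma hasSum_ascPochhammer_div_ascPochhammer_add {s : ℝ} (hs : 0 < s) (n : ℕ) :
    HasSum (fun m : ℕ ↦ (ascPochhammer ℝ (m + 1)).eval (n : ℝ) /
        (ascPochhammer ℝ (m + 1)).eval (n + s) / (m + 1))
      (∑ k ∈ range n, 1 / (s + k)) := by
  induction n with
  | zero => simp [ascPochhammer_succ_left]
  | succ n ih =>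
    -- Passing from `n` to `n + 1` adds the telescoping series `(R m - R (m + 1)) / (s + n)`.
    set R : ℕ → ℝ := fun m ↦
      (ascPochhammer ℝ m).eval (n + 1 : ℝ) / (ascPochhammer ℝ m).eval (n + 1 + s)
    have hR_succ (m : ℕ) : R (m + 1) = R m * ((n + 1 + m) / (n + 1 + s + m)) := by
      simp only [R, ascPochhammer_succ_eval, mul_div_mul_comm]
    have hR_anti : Antitone R := antitone_nat_of_succ_le fun m ↦ by
      have : 0 ≤ R m := div_nonneg (ascPochhammer_pos m _ (by positivity)).le
        (ascPochhammer_pos m _ (by positivity)).le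
      rw [hR_succ]
      refine mul_le_of_le_one_right this ((div_le_one (by positivity)).2 (by linarith))
    have hR_lim : Tendsto R atTop (𝓝 0) :=
      tendsto_ascPochhammer_div_ascPochhammer_add (by positivity) hs
    have hR := (hasSum_sub_succ_of_antitone hR_anti hR_lim).mul_left (1 / (s + n))
    rw [sum_range_succ]
    convert ih.add hR using 1
    · ext m
      have hprev : (ascPochhammer ℝ (m + 1)).eval (n : ℝ) / (ascPochhammer ℝ (m + 1)).eval (n + s)
          = n / (n + s) * R m := by
        simp only [R, ascPochhammer_eval_succ_left, mul_div_mul_comm, add_right_comm]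
      have hnext : (ascPochhammer ℝ (m + 1)).eval ((n + 1 : ℕ) : ℝ) /
          (ascPochhammer ℝ (m + 1)).eval ((n + 1 : ℕ) + s) = R (m + 1) := by
        simp only [R, Nat.cast_succ]
      rw [hprev, hnext, hR_succ]
      field_simp
      ring
    · simp [R]

lemma hasSum_one_sub_rpow_neg (a : ℝ) {x : ℝ} (hx : |x| < 1) :
    HasSum (fun n ↦ (ascPochhammer ℝ n).eval a / n ! * x ^ n) ((1 - x) ^ (-a)) := by
  have h := (Real.one_div_one_sub_rpow_hasFPowerSeriesOnBall_zero a).hasSum (y := x)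
    (by simpa [enorm_eq_nnnorm, ← NNReal.coe_lt_coe] using hx)
  have hcoeff (n : ℕ) : Ring.choose (a + n - 1) n = (ascPochhammer ℝ n).eval a / n ! := by
    rw [eq_div_iff (by positivity), mul_comm, ← nsmul_eq_mul, ← Ring.multichoose_eq,
      Ring.factorial_nsmul_multichoose_eq_ascPochhammer, Polynomial.ascPochhammer_smeval_eq_eval]
  simpa [mul_comm, FormalMultilinearSeries.ofScalars_apply_eq, hcoeff,
    Real.rpow_neg (sub_nonneg.2 (le_of_abs_le hx.le))] using h

lemma ofReal_rpow_mul_one_sub_rpow (u v : ℝ) {x : ℝ} (hx : x ∈ Set.Ioo (0 : ℝ) 1) :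
    (x : ℂ) ^ ((u : ℂ) - 1) * (1 - (x : ℂ)) ^ ((v : ℂ) - 1) =
      ((x ^ (u - 1) * (1 - x) ^ (v - 1) : ℝ) : ℂ) := by
  push_cast [Complex.ofReal_cpow hx.1.le, Complex.ofReal_cpow (sub_nonneg.2 hx.2.le)]
  rfl

lemma integrableOn_rpow_mul_one_sub_rpow {u v : ℝ} (hu : 0 < u) (hv : 0 < v) :
    IntegrableOn (fun x : ℝ ↦ x ^ (u - 1) * (1 - x) ^ (v - 1)) (Set.Ioo 0 1) := by
  have h : IntegrableOn _ (Set.Ioo (0 : ℝ) 1) :=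
    (intervalIntegrable_iff_integrableOn_Ioo_of_le zero_le_one).1
      (Complex.betaIntegral_convergent (u := u) (v := v) (by simpa) (by simpa))
  refine IntegrableOn.congr_fun (Integrable.re h) (fun x hx ↦ ?_) measurableSet_Ioo
  simp only [ofReal_rpow_mul_one_sub_rpow u v hx, RCLike.re_to_complex, Complex.ofReal_re]

lemma integral_rpow_mul_one_sub_rpow {u v : ℝ} (hu : 0 < u) (hv : 0 < v) :
    ∫ x : ℝ in Set.Ioo 0 1, x ^ (u - 1) * (1 - x) ^ (v - 1) = beta u v := by
  rw [beta_eq_betaIntegralReal u v hu hv, Complex.betaIntegral,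
    intervalIntegral.integral_of_le zero_le_one, integral_Ioc_eq_integral_Ioo,
    setIntegral_congr_fun measurableSet_Ioo fun x hx ↦ ofReal_rpow_mul_one_sub_rpow u v hx,
    integral_complex_ofReal, Complex.ofReal_re]

lemma beta_add_natCast {u v : ℝ} (hu : 0 < u) (hv : 0 < v) (n : ℕ) :
    beta (u + n) v = beta u v *
      ((ascPochhammer ℝ n).eval u / (ascPochhammer ℝ n).eval (u + v)) := by
  rw [beta, beta, add_right_comm, Gamma_add_natCast hu,
    Gamma_add_natCast (add_pos hu hv)]
  ring

lemma hasSum_ascPochhammer_mul_beta {a b v : ℝ} (ha : 0 < a) (hb : 0 < b) (hv : a < v) :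
    HasSum (fun n : ℕ ↦ (ascPochhammer ℝ n).eval a / n ! * beta (b + n) v)
      (beta b (v - a)) := by
  have hv₀ : 0 < v := ha.trans hv
  have hcoeff (n : ℕ) : 0 ≤ (ascPochhammer ℝ n).eval a / n ! :=
    div_nonneg (ascPochhammer_pos n a ha).le (by positivity)
  have hseries : ∀ x ∈ Set.Ioo (0 : ℝ) 1, HasSum (fun n : ℕ ↦ (ascPochhammer ℝ n).eval a / n ! *
      (x ^ (b + n - 1) * (1 - x) ^ (v - 1))) (x ^ (b - 1) * (1 - x) ^ (v - a - 1)) := by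
    rintro x ⟨hx₀, hx₁⟩
    have h := (hasSum_one_sub_rpow_neg a (abs_lt.2 ⟨by linarith, hx₁⟩)).mul_left
      (x ^ (b - 1) * (1 - x) ^ (v - 1))
    rw [mul_assoc, ← Real.rpow_add (sub_pos.2 hx₁), show v - 1 + -a = v - a - 1 by ring] at h
    refine h.congr_fun fun n ↦ ?_
    rw [add_sub_right_comm, Real.rpow_add_natCast hx₀.ne']
    ring
  simp only [← integral_rpow_mul_one_sub_rpow hb (sub_pos.2 hv),
    ← integral_rpow_mul_one_sub_rpow (add_pos_of_pos_of_nonneg hb (Nat.cast_nonneg _)) hv₀,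
    ← integral_const_mul]
  have hint (n : ℕ) := (integrableOn_rpow_mul_one_sub_rpow
    (add_pos_of_pos_of_nonneg hb n.cast_nonneg) hv₀).const_mul ((ascPochhammer ℝ n).eval a / n !)
  refine hasSum_integral_of_dominated_convergence _ (fun n ↦ (hint n).aestronglyMeasurable)
    (fun n ↦ ae_restrict_of_forall_mem measurableSet_Ioo fun x hx ↦ ?_)
    (ae_restrict_of_forall_mem measurableSet_Ioo fun x hx ↦ (hseries x hx).summable) ?_
    (ae_restrict_of_forall_mem measurableSet_Ioo hseries)
  · exact (Real.norm_of_nonneg (mul_nonneg (hcoeff n) (mul_nonneg (Real.rpow_nonneg hx.1.le _)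
      (Real.rpow_nonneg (sub_pos.2 hx.2).le _)))).le
  · exact (integrableOn_rpow_mul_one_sub_rpow hb (sub_pos.2 hv)).congr_fun
      (fun x hx ↦ (hseries x hx).tsum_eq.symm) measurableSet_Ioo

/-- The value of `₂F₁(a, b; c; 1)` in Gauss's summation theorem, meaningful for `a + b < c`. -/
noncomputable def gaussQuotient (a b c : ℝ) : ℝ :=
  Real.Gamma c * Real.Gamma (c - a - b) / (Real.Gamma (c - a) * Real.Gamma (c - b))

theorem hasSum_ordinaryHypergeometricCoefficient {a b c : ℝ} (ha : 0 < a) (hb : 0 < b)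
    (hc : a + b < c) :
    HasSum (ordinaryHypergeometricCoefficient a b c) (gaussQuotient a b c) := by
  have hcb : 0 < c - b := by linarith
  have hβ := beta_pos hb hcb
  have h := (hasSum_ascPochhammer_mul_beta ha hb (lt_sub_iff_add_lt.2 hc)).div_const
    (beta b (c - b))
  convert! h using 1
  · ext n
    rw [beta_add_natCast hb hcb, add_sub_cancel, ordinaryHypergeometricCoefficient]
    field_simp
  · have hΓb := (Real.Gamma_pos_of_pos hb).ne'
    have hΓcb := (Real.Gamma_pos_of_pos hcb).ne'
    rw [beta, beta, gaussQuotient, add_sub_cancel,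
      show b + (c - b - a) = c - a by ring, sub_right_comm]
    field_simp

lemma ordinaryHypergeometricCoefficient_nonneg {a b c : ℝ} (ha : 0 < a) (hb : 0 < b) (hc : 0 < c)
    (n : ℕ) : 0 ≤ ordinaryHypergeometricCoefficient a b c n := by
  have hpos {x : ℝ} (hx : 0 < x) := (ascPochhammer_pos n x hx).le
  have := hpos ha
  have := hpos hb
  have := hpos hc
  unfold ordinaryHypergeometricCoefficient
  positivity

lemma hasDerivAt_ascPochhammer_eval {x : ℝ} (hx : 0 < x) (n : ℕ) :
    HasDerivAt (fun x ↦ (ascPochhammer ℝ n).eval x)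
      ((ascPochhammer ℝ n).eval x * ∑ k ∈ range n, 1 / (x + k)) x := by
  induction n with
  | zero => simpa using hasDerivAt_const x (1 : ℝ)
  | succ n ih =>
    simp only [ascPochhammer_succ_eval, sum_range_succ]
    convert! ih.mul ((hasDerivAt_id x).add_const (n : ℝ)) using 1
    have : x + n ≠ 0 := by positivity
    simp only [id]
    field_simp

lemma hasDerivAt_ordinaryHypergeometricCoefficient (a b : ℝ) {c : ℝ} (hc : 0 < c) (n : ℕ) :
    HasDerivAt (fun c ↦ ordinaryHypergeometricCoefficient a b c n)
      (-(ordinaryHypergeometricCoefficient a b c n * ∑ k ∈ range n, 1 / (c + k))) c := by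
  have hne := (ascPochhammer_pos n c hc).ne'
  convert! ((hasDerivAt_ascPochhammer_eval hc n).inv hne).const_mul
    ((n ! : ℝ)⁻¹ * (ascPochhammer ℝ n).eval a * (ascPochhammer ℝ n).eval b) using 1
  rw [ordinaryHypergeometricCoefficient]
  field_simp

-- The tangent-line bound at `x + δ` for the convex function `y ↦ 1 / (y)_n`.
lemma ascPochhammer_eval_mul_one_add_le {x δ : ℝ} (hx : 0 < x) (hδ : 0 ≤ δ) (n : ℕ) :
    (ascPochhammer ℝ n).eval x * (1 + δ * ∑ k ∈ range n, 1 / (x + δ + k)) ≤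
      (ascPochhammer ℝ n).eval (x + δ) := by
  induction n with
  | zero => simp
  | succ n ih =>
    have hP := (ascPochhammer_pos n x hx).le
    set S := ∑ k ∈ range n, 1 / (x + δ + k)
    have hS : 0 ≤ S := sum_nonneg fun k _ ↦ by positivity
    rw [sum_range_succ, ascPochhammer_succ_eval, ascPochhammer_succ_eval]
    have hfactor : (x + n) * (1 + δ * (S + 1 / (x + δ + n))) ≤ (1 + δ * S) * (x + δ + n) := by
      have h₁ : (x + n) * (1 / (x + δ + n)) ≤ 1 := by
        rw [mul_one_div]
        exact div_le_one_of_le₀ (by linarith) (by positivity)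
      nlinarith [mul_le_mul_of_nonneg_left h₁ hδ, mul_nonneg (mul_nonneg hδ hδ) hS]
    calc _ = (ascPochhammer ℝ n).eval x * ((x + n) * (1 + δ * (S + 1 / (x + δ + n)))) := by ring
      _ ≤ (ascPochhammer ℝ n).eval x * ((1 + δ * S) * (x + δ + n)) := by gcongr
      _ = (ascPochhammer ℝ n).eval x * (1 + δ * S) * (x + δ + n) := by ring
      _ ≤ _ := by gcongr

lemma summable_ordinaryHypergeometricCoefficient_mul_sum {a b c : ℝ} (ha : 0 < a) (hb : 0 < b)
    (hc : a + b < c) :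
    Summable fun n ↦ ordinaryHypergeometricCoefficient a b c n * ∑ k ∈ range n, 1 / (c + k) := by
  obtain ⟨c', hac', hc'c⟩ := exists_between hc
  have hc' : 0 < c' := (add_pos ha hb).trans hac'
  have hδ : 0 < c - c' := sub_pos.2 hc'c
  have hc₀ : 0 < c := hc'.trans hc'c
  refine .of_nonneg_of_le (fun n ↦ ?_) (fun n ↦ ?_)
    ((hasSum_ordinaryHypergeometricCoefficient ha hb hac').summable.div_const (c - c'))
  · exact mul_nonneg (ordinaryHypergeometricCoefficient_nonneg ha hb hc₀ n)
      (sum_nonneg fun k _ ↦ by positivity)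
  · have h := ascPochhammer_eval_mul_one_add_le hc' hδ.le n
    rw [add_sub_cancel] at h
    have hP := ascPochhammer_pos n c hc₀
    have hP' := ascPochhammer_pos n c' hc'
    have hA := (ascPochhammer_pos n a ha).le
    have hB := (ascPochhammer_pos n b hb).le
    have hratio : (((ascPochhammer ℝ n).eval c)⁻¹ * ∑ k ∈ range n, 1 / (c + k)) * (c - c') ≤
        ((ascPochhammer ℝ n).eval c')⁻¹ := by
      rw [← mul_le_mul_iff_right₀ hP, ← mul_le_mul_iff_right₀ hP']
      field_simp
      linarith
    rw [le_div_iff₀ hδ]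
    calc _ = (n ! : ℝ)⁻¹ * (ascPochhammer ℝ n).eval a * (ascPochhammer ℝ n).eval b *
          ((((ascPochhammer ℝ n).eval c)⁻¹ * ∑ k ∈ range n, 1 / (c + k)) * (c - c')) := by
            rw [ordinaryHypergeometricCoefficient]; ring
      _ ≤ _ := by
        rw [ordinaryHypergeometricCoefficient]
        gcongr

lemma ordinaryHypergeometricCoefficient_mul_sum_anti {a b c c' : ℝ} (ha : 0 < a) (hb : 0 < b)
    (hc : 0 < c) (hcc' : c ≤ c') (n : ℕ) :
    ordinaryHypergeometricCoefficient a b c' n * ∑ k ∈ range n, 1 / (c' + k) ≤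
      ordinaryHypergeometricCoefficient a b c n * ∑ k ∈ range n, 1 / (c + k) := by
  have hA := (ascPochhammer_pos n a ha).le
  have hB := (ascPochhammer_pos n b hb).le
  have hP := ascPochhammer_pos n c hc
  have hmono : (ascPochhammer ℝ n).eval c ≤ (ascPochhammer ℝ n).eval c' := by
    simp only [ascPochhammer_eval_eq_prod_range]
    gcongr
  have hS : 0 ≤ ∑ k ∈ range n, 1 / (c' + k) :=
    sum_nonneg fun k _ ↦ have := hc.trans_le hcc'; by positivity
  unfold ordinaryHypergeometricCoefficient
  gcongr

lemma hasDerivAt_tsum_ordinaryHypergeometricCoefficient {a b c : ℝ} (ha : 0 < a) (hb : 0 < b)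
    (hc : a + b < c) :
    HasDerivAt (fun c ↦ ∑' n, ordinaryHypergeometricCoefficient a b c n)
      (∑' n, -(ordinaryHypergeometricCoefficient a b c n * ∑ k ∈ range n, 1 / (c + k))) c := by
  obtain ⟨c₀, hac₀, hc₀c⟩ := exists_between hc
  have hc₀ : 0 < c₀ := (add_pos ha hb).trans hac₀
  refine hasDerivAt_tsum_of_isPreconnected
    (summable_ordinaryHypergeometricCoefficient_mul_sum ha hb hac₀) isOpen_Ioi isPreconnected_Ioi
    (fun n y hy ↦ hasDerivAt_ordinaryHypergeometricCoefficient a b (hc₀.trans hy) n)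
    (fun n y hy ↦ ?_) hc₀c (hasSum_ordinaryHypergeometricCoefficient ha hb hc).summable hc₀c
  have hy₀ : 0 < y := hc₀.trans hy
  rw [norm_neg, Real.norm_of_nonneg (mul_nonneg
    (ordinaryHypergeometricCoefficient_nonneg ha hb hy₀ n) (sum_nonneg fun k _ ↦ by positivity))]
  exact ordinaryHypergeometricCoefficient_mul_sum_anti ha hb hc₀ hy.le n

/-- The real digamma function. -/
local notation "ψ" => logDeriv Real.Gamma

lemma hasDerivAt_Gamma {x : ℝ} (hx : 0 < x) :
    HasDerivAt Real.Gamma (Real.Gamma x * ψ x) x := by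
  have hne := (Real.Gamma_pos_of_pos hx).ne'
  rw [logDeriv_apply, mul_div_cancel₀ _ hne]
  exact (Real.differentiableOn_Gamma_Ioi.differentiableAt (Ioi_mem_nhds hx)).hasDerivAt

lemma logDeriv_Gamma_add_one {x : ℝ} (hx : 0 < x) : ψ (x + 1) = ψ x + 1 / x := by
  have hne := (Real.Gamma_pos_of_pos hx).ne'
  have h : HasDerivAt (fun y ↦ Real.Gamma (y + 1)) _ x :=
    (hasDerivAt_Gamma (add_pos hx one_pos)).comp_add_const x 1
  have h' : HasDerivAt (fun y ↦ Real.Gamma (y + 1)) _ x :=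
    ((hasDerivAt_id x).mul (hasDerivAt_Gamma hx)).congr_of_eventuallyEq
      (by filter_upwards [eventually_gt_nhds hx] with y hy; exact Real.Gamma_add_one hy.ne')
  have := h.unique h'
  rw [Real.Gamma_add_one hx.ne'] at this
  simp only [id] at this
  field_simp at this ⊢
  linarith

lemma hasDerivAt_gaussQuotient {a b c : ℝ} (ha : 0 < a) (hb : 0 < b) (hc : a + b < c) :
    HasDerivAt (gaussQuotient a b)
      (gaussQuotient a b c * (ψ c + ψ (c - a - b) - ψ (c - a) - ψ (c - b))) c := by
  have hca : 0 < c - a := by linarith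
  have hcb : 0 < c - b := by linarith
  have hcab : 0 < c - a - b := by linarith
  have hΓca := (Real.Gamma_pos_of_pos hca).ne'
  have hΓcb := (Real.Gamma_pos_of_pos hcb).ne'
  have h := ((hasDerivAt_Gamma (by linarith : 0 < c)).mul
    (((hasDerivAt_Gamma (by rwa [sub_sub] at hcab)).comp_sub_const c (a + b)))).div
      (((hasDerivAt_Gamma hca).comp_sub_const c a).mul ((hasDerivAt_Gamma hcb).comp_sub_const c b))
      (mul_ne_zero hΓca hΓcb)
  simp only [← sub_sub] at h
  convert! h using 1
  rw [gaussQuotient]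
  simp only [Pi.mul_apply]
  field_simp
  ring

lemma hasSum_ordinaryHypergeometricCoefficient_mul_sum {a b c : ℝ} (ha : 0 < a) (hb : 0 < b)
    (hc : a + b < c) :
    HasSum (fun n ↦ ordinaryHypergeometricCoefficient a b c n * ∑ k ∈ range n, 1 / (c + k))
      (gaussQuotient a b c * (ψ (c - a) + ψ (c - b) - ψ c - ψ (c - a - b))) := by
  have hgauss : (fun c ↦ ∑' n, ordinaryHypergeometricCoefficient a b c n) =ᶠ[𝓝 c]
      gaussQuotient a b := by
    filter_upwards [eventually_gt_nhds hc] with c hc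
    exact (hasSum_ordinaryHypergeometricCoefficient ha hb hc).tsum_eq
  have hderiv := (hasDerivAt_tsum_ordinaryHypergeometricCoefficient ha hb hc).unique
    ((hasDerivAt_gaussQuotient ha hb hc).congr_of_eventuallyEq hgauss)
  rw [tsum_neg, neg_eq_iff_eq_neg] at hderiv
  rw [(summable_ordinaryHypergeometricCoefficient_mul_sum ha hb hc).hasSum_iff, hderiv]
  ring

/-- The summand of the Kampé de Fériet series `F^{1;2;2}_{1;1;1}[2; d; 1, 1; 2; a, b; 1 | 1, 1]`,
indexed by the pair `(m, n)`. -/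
noncomputable def kampeDeFerietTerm (a b d : ℝ) (p : ℕ × ℕ) : ℝ :=
  ((ascPochhammer ℝ (p.1 + p.2)).eval 2 / (ascPochhammer ℝ (p.1 + p.2)).eval d) *
    ((ascPochhammer ℝ p.1).eval 1 * (ascPochhammer ℝ p.1).eval 1 /
      ((ascPochhammer ℝ p.1).eval 2 * (p.1 ! : ℝ))) *
    ((ascPochhammer ℝ p.2).eval a * (ascPochhammer ℝ p.2).eval b /
      ((ascPochhammer ℝ p.2).eval 1 * (p.2 ! : ℝ)))

lemma kampeDeFerietTerm_nonneg {a b d : ℝ} (ha : 0 < a) (hb : 0 < b) (hd : 0 < d) (p : ℕ × ℕ) :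
    0 ≤ kampeDeFerietTerm a b d p := by
  have hpos {x : ℝ} (hx : 0 < x) (k : ℕ) := (ascPochhammer_pos k x hx).le
  have := hpos ha p.2
  have := hpos hb p.2
  have := hpos hd (p.1 + p.2)
  have := hpos two_pos (p.1 + p.2)
  have := hpos two_pos p.1
  have := hpos one_pos p.1
  have := hpos one_pos p.2
  unfold kampeDeFerietTerm
  positivity

lemma kampeDeFerietTerm_eq (a b : ℝ) {d : ℝ} (hd : 1 < d) (m n : ℕ) :
    kampeDeFerietTerm a b d (m, n) =
      (d - 1) * ordinaryHypergeometricCoefficient a b (d - 1) n *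
        ((ascPochhammer ℝ (m + 1)).eval (n + 1 : ℝ) /
          (ascPochhammer ℝ (m + 1)).eval (n + 1 + (d - 2)) / (m + 1)) := by
  have hd₀ : 0 < d := one_pos.trans hd
  have hnum := mul_ascPochhammer_eval_add_one m n (1 : ℝ)
  have hden := mul_ascPochhammer_eval_add_one m n (d - 1)
  rw [one_mul, one_add_one_eq_two, ascPochhammer_eval_one, add_comm (1 : ℝ)] at hnum
  rw [sub_add_cancel, show d - 1 + n = n + 1 + (d - 2) by ring] at hden
  have hden_mn := (ascPochhammer_pos (m + n) d hd₀).ne'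
  have hden_n := (ascPochhammer_pos n (d - 1) (sub_pos.2 hd)).ne'
  have hden_m := (ascPochhammer_pos (m + 1) ((n : ℝ) + 1 + (d - 2))
    (by linarith [n.cast_nonneg (α := ℝ)])).ne'
  simp only [kampeDeFerietTerm, ordinaryHypergeometricCoefficient, hnum, ascPochhammer_eval_one,
    ascPochhammer_eval_two, Nat.factorial_succ, Nat.cast_mul, Nat.cast_succ]
  field_simp
  linear_combination -((ascPochhammer ℝ n).eval a * (ascPochhammer ℝ n).eval b *
    (ascPochhammer ℝ (m + 1)).eval (n + 1 : ℝ)) * hden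

lemma hasSum_kampeDeFerietTerm_left (a b : ℝ) {d : ℝ} (hd : 2 < d) (n : ℕ) :
    HasSum (fun m ↦ kampeDeFerietTerm a b d (m, n))
      ((d - 1) * (ordinaryHypergeometricCoefficient a b (d - 1) n * (1 / (d - 2)) +
        ordinaryHypergeometricCoefficient a b (d - 1) n * ∑ k ∈ range n, 1 / (d - 1 + k))) := by
  have hsum : ∑ k ∈ range (n + 1), 1 / (d - 2 + k) =
      1 / (d - 2) + ∑ k ∈ range n, 1 / (d - 1 + k) := by
    rw [sum_range_succ', add_comm]
    simp only [Nat.cast_zero, add_zero, Nat.cast_succ]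
    congr! 3
    ring
  have h := (hasSum_ascPochhammer_div_ascPochhammer_add (sub_pos.2 hd) (n + 1)).mul_left
    ((d - 1) * ordinaryHypergeometricCoefficient a b (d - 1) n)
  rw [hsum, mul_assoc, mul_add] at h
  refine h.congr_fun fun m ↦ ?_
  rw [kampeDeFerietTerm_eq a b (by linarith), Nat.cast_succ]

theorem kampe_de_feriet_eq_three_pi_log_two_general {a b d : ℝ} (ha : 0 < a) (hb : 0 < b)
    (hd : 2 < d) (habd : a + b + 1 < d) :
    HasSum (kampeDeFerietTerm a b d)
      ((d - 1) * gaussQuotient a b (d - 1) *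
        (ψ (d - 1 - a) + ψ (d - 1 - b) - ψ (d - 2) - ψ (d - 1 - a - b))) := by
  have hc : a + b < d - 1 := by linarith
  have hψ : ψ (d - 1) = ψ (d - 2) + 1 / (d - 2) := by
    rw [← logDeriv_Gamma_add_one (sub_pos.2 hd)]
    ring_nf
  have houter := (((hasSum_ordinaryHypergeometricCoefficient ha hb hc).mul_right (1 / (d - 2))).add
    (hasSum_ordinaryHypergeometricCoefficient_mul_sum ha hb hc)).mul_left (d - 1)
  have hinner := hasSum_kampeDeFerietTerm_left a b hd
  rw [← (Equiv.prodComm ℕ ℕ).hasSum_iff]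
  have hsummable : Summable (kampeDeFerietTerm a b d ∘ Equiv.prodComm ℕ ℕ) :=
    (summable_prod_of_nonneg fun p ↦ kampeDeFerietTerm_nonneg ha hb (two_pos.trans hd) p.swap).2
      ⟨fun n ↦ (hinner n).summable, houter.summable.congr fun n ↦ (hinner n).tsum_eq.symm⟩
  convert! hsummable.hasSum using 1
  rw [(hsummable.hasSum.prod_fiberwise hinner).unique houter, hψ]
  ring

lemma gaussQuotient_half_half : gaussQuotient (1 / 2) (1 / 2) (3 / 2) = Real.pi / 2 := by
  have h : Real.Gamma (3 / 2) = 1 / 2 * √Real.pi := by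
    rw [← Real.Gamma_one_half_eq, ← Real.Gamma_add_one (by norm_num)]
    norm_num
  norm_num [gaussQuotient, h, Real.Gamma_one_half_eq]
  linear_combination 1 / 2 * Real.mul_self_sqrt Real.pi_nonneg

lemma logDeriv_Gamma_one_sub_logDeriv_Gamma_half : ψ 1 - ψ (1 / 2) = 2 * Real.log 2 := by
  have h : √Real.pi ≠ 0 := (Real.sqrt_pos.2 Real.pi_pos).ne'
  rw [logDeriv_apply, logDeriv_apply, Real.hasDerivAt_Gamma_one.deriv,
    Real.hasDerivAt_Gamma_one_half.deriv, Real.Gamma_one, Real.Gamma_one_half_eq]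
  field_simp
  ring

theorem kampe_de_feriet_eq_three_pi_log_two :
    Summable (fun p : ℕ × ℕ =>
      ((ascPochhammer ℝ (p.1 + p.2)).eval (2 : ℝ) / (ascPochhammer ℝ (p.1 + p.2)).eval (5 / 2 : ℝ)) *
        ((ascPochhammer ℝ p.1).eval (1 : ℝ) * (ascPochhammer ℝ p.1).eval (1 : ℝ) /
          ((ascPochhammer ℝ p.1).eval (2 : ℝ) * (p.1.factorial : ℝ))) *
        ((ascPochhammer ℝ p.2).eval (1 / 2 : ℝ) * (ascPochhammer ℝ p.2).eval (1 / 2 : ℝ) /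
          ((ascPochhammer ℝ p.2).eval (1 : ℝ) * (p.2.factorial : ℝ)))) ∧
    ∑' p : ℕ × ℕ,
      ((ascPochhammer ℝ (p.1 + p.2)).eval (2 : ℝ) / (ascPochhammer ℝ (p.1 + p.2)).eval (5 / 2 : ℝ)) *
        ((ascPochhammer ℝ p.1).eval (1 : ℝ) * (ascPochhammer ℝ p.1).eval (1 : ℝ) /
          ((ascPochhammer ℝ p.1).eval (2 : ℝ) * (p.1.factorial : ℝ))) *
        ((ascPochhammer ℝ p.2).eval (1 / 2 : ℝ) * (ascPochhammer ℝ p.2).eval (1 / 2 : ℝ) /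
          ((ascPochhammer ℝ p.2).eval (1 : ℝ) * (p.2.factorial : ℝ))) =
      3 * Real.pi * Real.log 2 := by
  suffices h : HasSum (kampeDeFerietTerm (1 / 2) (1 / 2) (5 / 2)) (3 * Real.pi * Real.log 2) from
    ⟨h.summable, h.tsum_eq⟩
  convert! kampe_de_feriet_eq_three_pi_log_two_general (a := 1 / 2) (b := 1 / 2) (d := 5 / 2)
    (by norm_num) (by norm_num) (by norm_num) (by norm_num) using 1
  norm_num [gaussQuotient_half_half]
  linear_combination -(3 / 2) * Real.pi * logDeriv_Gamma_one_sub_logDeriv_Gamma_half
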